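/- The triple (T_•, ∗̂, δ̄) is a graded connected Hopf algebra over ℤ: (T_•, ∗̂) is a graded associative unital algebra, δ̄ is a coassociative counital coproduct, δ̄ is an algebra homomorphism from (T_•, ∗̂) to its tensor square equipped with the componentwise product (that is, δ̄(x ∗̂ y) = δ̄(x) · δ̄(y)), the counit (projection onto T_0 ≅ ℤ) is an algebra homomorphism, and, T_• being graded with degree-0 component ℤ, an antipode exists. -/

import Mathlib

set_option linter.unreachableTactic false
set_option linter.unusedTactic false
set_option maxHeartbeats 1000000


open Finset

/-- Candidate set compositions: lists of finite sets of positive naturals. -/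
abbrev SC : Type := List (Finset ℕ)

/-- The underlying (ground) set of a list of blocks. -/
def ground (L : SC) : Finset ℕ := L.foldr (· ∪ ·) ∅

/-- `L` is a set composition of `[n] = {1,…,n}`. -/
def IsSetComp (n : ℕ) (L : SC) : Prop :=
  (∀ B ∈ L, B.Nonempty) ∧ L.Pairwise Disjoint ∧ ground L = Finset.Icc 1 n

/-- The degree of a set composition (largest element of its ground set). -/
def maxG (L : SC) : ℕ := (ground L).sup id

/-- The 1-based rank of `x` inside the finite set `A` (the position of `x` in the
increasing enumeration of `A`, when `x ∈ A`); this is the order preserving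
relabelling `A → [|A|]`. -/
def rankIn (A : Finset ℕ) (x : ℕ) : ℕ := (A.filter (· ≤ x)).card

/-- `P|_A` : intersect the blocks with `A`, delete the empty intersections, and
relabel along the order preserving bijection `A → [|A|]`. -/
def restrictSC (A : Finset ℕ) (L : SC) : SC :=
  (L.map fun B => (B ∩ A).image (rankIn A)).filter fun B => decide B.Nonempty

/-- Shift all entries of all blocks by `p`. -/
def shiftSC (p : ℕ) (L : SC) : SC := L.map (Finset.image (· + p))

/-- The restricted product `∗̄` on set compositions:
`P ∗̄ Q = (P₁,…,P_k, p+Q₁,…,p+Q_l)` for `P ∈ Comp_p`. -/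
def barMul (P Q : SC) : SC := P ++ shiftSC (maxG P) Q

/-- The order-preserving relabelling map `S → T` (`is_{S,T}`), for finite sets
of equal cardinality. -/
def relabelFun (S T : Finset ℕ) (x : ℕ) : ℕ := (T.sort (· ≤ ·)).getD (rankIn S x - 1) 0

/-- Relabel a set composition of `S` along the order-preserving bijection `S → T`. -/
def relabelSC (S T : Finset ℕ) (L : SC) : SC := L.map (Finset.image (relabelFun S T))

variable (R : Type) [CommRing R]

/-- The free module with basis indexed by lists of blocks; the twisted descent
algebra `T_•` is its submodule spanned by the set compositions. -/
abbrev FM := SC →₀ R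

/-- `T_•` as a submodule: the span of the set compositions. -/
noncomputable def Tspan : Submodule R (FM R) :=
  Submodule.span R {f : FM R | ∃ n P, IsSetComp n P ∧ f = Finsupp.single P 1}

/-- The restricted product `∗̄` as a bilinear map. -/
noncomputable def barL : FM R →ₗ[R] FM R →ₗ[R] FM R :=
  Finsupp.lift _ R SC fun P => Finsupp.lift _ R SC fun Q => Finsupp.single (barMul P Q) 1

/-- The symmetrized product `∗̂` on basis elements:
`P ∗̂ Q = Σ is_{[p],A}(P) ∗ is_{[q],B}(Q)` over all `A ⊔ B = [p+q]`, `|A| = p`. -/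
noncomputable def hatB (P Q : SC) : FM R :=
  ∑ A ∈ (Finset.Icc 1 (maxG P + maxG Q)).powerset.filter (fun A => A.card = maxG P),
    Finsupp.single
      (relabelSC (Finset.Icc 1 (maxG P)) A P ++
        relabelSC (Finset.Icc 1 (maxG Q)) ((Finset.Icc 1 (maxG P + maxG Q)) \ A) Q) 1

/-- The symmetrized product `∗̂` as a bilinear map. -/
noncomputable def hatL : FM R →ₗ[R] FM R →ₗ[R] FM R :=
  Finsupp.lift _ R SC fun P => Finsupp.lift _ R SC fun Q => hatB R P Q

/-- `T_• ⊗ T_•`, realized as the free module on pairs of basis elements. -/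
abbrev FM2 := (SC × SC) →₀ R

/-- `T_• ⊗ T_• ⊗ T_•`, realized as the free module on triples of basis elements. -/
abbrev FM3 := (SC × SC × SC) →₀ R

/-- The restricted coproduct `δ̄ (P) = Σ_{p=0}^n P|_{[p]} ⊗ P|_{{p+1,…,n}}`. -/
noncomputable def dBarL : FM R →ₗ[R] FM2 R :=
  Finsupp.lift _ R SC fun P =>
    ∑ p ∈ Finset.range (maxG P + 1),
      Finsupp.single
        (restrictSC (Finset.Icc 1 p) P, restrictSC (Finset.Icc (p+1) (maxG P)) P) 1

/-- The cosymmetrized coproduct `δ̂ (P) = Σ_{A ⊔ B = [n]} P|_A ⊗ P|_B`. -/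
noncomputable def dHatL : FM R →ₗ[R] FM2 R :=
  Finsupp.lift _ R SC fun P =>
    ∑ A ∈ (Finset.Icc 1 (maxG P)).powerset,
      Finsupp.single (restrictSC A P, restrictSC ((Finset.Icc 1 (maxG P)) \ A) P) 1

/-- Apply a coproduct to the first tensor factor:  `d ⊗ id : T⊗T → T⊗T⊗T`. -/
noncomputable def applyFst (d : FM R →ₗ[R] FM2 R) : FM2 R →ₗ[R] FM3 R :=
  Finsupp.lift _ R (SC × SC) fun PQ =>
    Finsupp.mapDomain (fun RS : SC × SC => (RS.1, RS.2, PQ.2)) (d (Finsupp.single PQ.1 1))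

/-- Apply a coproduct to the second tensor factor:  `id ⊗ d : T⊗T → T⊗T⊗T`. -/
noncomputable def applySnd (d : FM R →ₗ[R] FM2 R) : FM2 R →ₗ[R] FM3 R :=
  Finsupp.lift _ R (SC × SC) fun PQ =>
    Finsupp.mapDomain (fun RS : SC × SC => (PQ.1, RS.1, RS.2)) (d (Finsupp.single PQ.2 1))

/-- `ε ⊗ id : T⊗T → T`, where `ε` is the projection onto `T_0 ≅ R`
(the coefficient of the empty set composition). -/
noncomputable def epsFst : FM2 R →ₗ[R] FM R :=
  Finsupp.lift _ R (SC × SC) fun PQ =>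
    if PQ.1 = ([] : SC) then Finsupp.single PQ.2 1 else 0

/-- `id ⊗ ε : T⊗T → T`. -/
noncomputable def epsSnd : FM2 R →ₗ[R] FM R :=
  Finsupp.lift _ R (SC × SC) fun PQ =>
    if PQ.2 = ([] : SC) then Finsupp.single PQ.1 1 else 0

/-- The twist map `x ⊗ y ↦ y ⊗ x` on `T_• ⊗ T_•`. -/
noncomputable def twistL : FM2 R →ₗ[R] FM2 R :=
  Finsupp.lift _ R (SC × SC) fun PQ => Finsupp.single (PQ.2, PQ.1) 1

/-- The counit: projection onto the degree-0 component `T_0 ≅ R`. -/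
noncomputable def counitL : FM R →ₗ[R] R :=
  Finsupp.lift _ R SC fun P => if P = ([] : SC) then 1 else 0

/-- The tensor product of two elements of `T_•`, inside `T_• ⊗ T_•`. -/
noncomputable def tensor2 (x y : FM R) : FM2 R :=
  x.sum fun U a => y.sum fun V b => Finsupp.single (U, V) (a * b)

/-- The componentwise product on `T_• ⊗ T_•` induced by the restricted
product `∗̄` : `(a ⊗ b) · (c ⊗ d) = (a ∗̄ c) ⊗ (b ∗̄ d)`. -/
noncomputable def mul2bar : FM2 R →ₗ[R] FM2 R →ₗ[R] FM2 R :=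
  Finsupp.lift _ R (SC × SC) fun PQ => Finsupp.lift _ R (SC × SC) fun RS =>
    Finsupp.single (barMul PQ.1 RS.1, barMul PQ.2 RS.2) 1

/-- The componentwise product on `T_• ⊗ T_•` induced by the symmetrized
product `∗̂` : `(a ⊗ b) · (c ⊗ d) = (a ∗̂ c) ⊗ (b ∗̂ d)`. -/
noncomputable def mul2hat : FM2 R →ₗ[R] FM2 R →ₗ[R] FM2 R :=
  Finsupp.lift _ R (SC × SC) fun PQ => Finsupp.lift _ R (SC × SC) fun RS =>
    tensor2 R (hatB R PQ.1 RS.1) (hatB R PQ.2 RS.2)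

/-- `m ∘ (S ⊗ id)` for the restricted product, used in the antipode axiom. -/
noncomputable def convBarFst (S : FM R →ₗ[R] FM R) : FM2 R →ₗ[R] FM R :=
  Finsupp.lift _ R (SC × SC) fun QR => barL R (S (Finsupp.single QR.1 1)) (Finsupp.single QR.2 1)

/-- `m ∘ (id ⊗ S)` for the restricted product, used in the antipode axiom. -/
noncomputable def convBarSnd (S : FM R →ₗ[R] FM R) : FM2 R →ₗ[R] FM R :=
  Finsupp.lift _ R (SC × SC) fun QR => barL R (Finsupp.single QR.1 1) (S (Finsupp.single QR.2 1))

/-- `m ∘ (S ⊗ id)` for the symmetrized product, used in the antipode axiom. -/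
noncomputable def convHatFst (S : FM R →ₗ[R] FM R) : FM2 R →ₗ[R] FM R :=
  Finsupp.lift _ R (SC × SC) fun QR => hatL R (S (Finsupp.single QR.1 1)) (Finsupp.single QR.2 1)

/-- `m ∘ (id ⊗ S)` for the symmetrized product, used in the antipode axiom. -/
noncomputable def convHatSnd (S : FM R →ₗ[R] FM R) : FM2 R →ₗ[R] FM R :=
  Finsupp.lift _ R (SC × SC) fun QR => hatL R (Finsupp.single QR.1 1) (S (Finsupp.single QR.2 1))

/-! ### Words

A word is a list of letters read from right to left: the letter `a` of `a :: w` sits at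
position `w.length + 1`. -/

section Words

variable {M N : Type*} [AddCommMonoid M] [AddCommMonoid N]

/-- The set of positions of the letter `c` in a word. -/
def positions (c : ℕ) : List ℕ → Finset ℕ
  | [] => ∅
  | a :: w => if a = c then insert (w.length + 1) (positions c w) else positions c w

/-- The set composition attached to a word: the non-empty position sets of its letters, in
increasing order of the letters. -/
def wordComp (w : List ℕ) : SC :=
  ((List.range (w.foldr max 0 + 1)).map (positions · w)).filter fun B => decide B.Nonempty

/-- The sum of `F` over all shuffles of two words. -/
def shuffleSum : (List ℕ → M) → List ℕ → List ℕ → M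
  | F, [], v => F v
  | F, a :: u, [] => F (a :: u)
  | F, a :: u, b :: v =>
    shuffleSum (fun s => F (a :: s)) u (b :: v) + shuffleSum (fun s => F (b :: s)) (a :: u) v
termination_by _ u v => u.length + v.length

/-- The sum of `F x y` over all factorizations of a word into an initial factor `x` and a final
factor `y`; as words are read from right to left, the list is `y ++ x`. -/
def splitSum : (List ℕ → List ℕ → M) → List ℕ → M
  | F, [] => F [] []
  | F, a :: w => F (a :: w) [] + splitSum (fun x y => F x (a :: y)) w

/-- The shuffle of two words in which the letters of the first one occupy the positions in `A`. -/
def mergeAt (A : Finset ℕ) : List ℕ → List ℕ → List ℕ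
  | [], v => v
  | a :: u, [] => a :: u
  | a :: u, b :: v =>
    if u.length + v.length + 2 ∈ A then a :: mergeAt A u (b :: v) else b :: mergeAt A (a :: u) v
termination_by u v => u.length + v.length

/-! ### Sums over shuffles and factorizations -/

@[simp]
theorem shuffleSum_nil_left (F : List ℕ → M) (v : List ℕ) : shuffleSum F [] v = F v := by
  simp [shuffleSum]

@[simp]
theorem shuffleSum_nil_right (F : List ℕ → M) (u : List ℕ) : shuffleSum F u [] = F u := by
  cases u <;> simp [shuffleSum]

theorem shuffleSum_cons_cons (F : List ℕ → M) (a b : ℕ) (u v : List ℕ) :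
    shuffleSum F (a :: u) (b :: v) = shuffleSum (fun s => F (a :: s)) u (b :: v) +
      shuffleSum (fun s => F (b :: s)) (a :: u) v := by
  rw [shuffleSum]

/-- Induction on pairs of words along the recursion defining shuffles. -/
theorem shuffle_induction {p : List ℕ → List ℕ → Prop} (nil_left : ∀ v, p [] v)
    (nil_right : ∀ u, p u [])
    (cons_cons : ∀ a u b v, p u (b :: v) → p (a :: u) v → p (a :: u) (b :: v)) :
    ∀ u v, p u v
  | [], v => nil_left v
  | a :: u, [] => nil_right (a :: u)
  | a :: u, b :: v => cons_cons a u b v (shuffle_induction nil_left nil_right cons_cons u (b :: v))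
      (shuffle_induction nil_left nil_right cons_cons (a :: u) v)
termination_by u v => u.length + v.length

theorem shuffleSum_add (F G : List ℕ → M) (u v : List ℕ) :
    shuffleSum (fun s => F s + G s) u v = shuffleSum F u v + shuffleSum G u v := by
  induction u, v using shuffle_induction generalizing F G with
  | nil_left v => simp
  | nil_right u => simp
  | cons_cons a u b v ih₁ ih₂ =>
    simp only [shuffleSum_cons_cons, ih₁, ih₂]
    abel

theorem map_shuffleSum (φ : M →+ N) (F : List ℕ → M) (u v : List ℕ) :
    φ (shuffleSum F u v) = shuffleSum (fun s => φ (F s)) u v := by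
  induction u, v using shuffle_induction generalizing F with
  | nil_left v => simp
  | nil_right u => simp
  | cons_cons a u b v ih₁ ih₂ => simp only [shuffleSum_cons_cons, map_add, ih₁, ih₂]

theorem shuffleSum_congr {F G : List ℕ → M} {u v : List ℕ}
    (h : ∀ s : List ℕ, s.length = u.length + v.length → (∀ c ∈ s, c ∈ u ∨ c ∈ v) → F s = G s) :
    shuffleSum F u v = shuffleSum G u v := by
  induction u, v using shuffle_induction generalizing F G with
  | nil_left v => simpa using h v (by simp) (by simp)
  | nil_right u => simpa using h u (by simp) (by simp)
  | cons_cons a u b v ih₁ ih₂ =>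
    rw [shuffleSum_cons_cons, shuffleSum_cons_cons]
    congr 1
    · refine ih₁ fun s hs hl => h _ (by simp [hs]; omega) ?_
      simp only [List.mem_cons] at hl ⊢
      grind
    · refine ih₂ fun s hs hl => h _ (by simp [hs]; omega) ?_
      simp only [List.mem_cons] at hl ⊢
      grind

theorem shuffleSum_assoc (F : List ℕ → M) : ∀ x y z : List ℕ,
    shuffleSum (fun s => shuffleSum F s z) x y = shuffleSum (fun s => shuffleSum F x s) y z
  | [], y, z => by simp
  | a :: x, [], z => by simp
  | a :: x, b :: y, [] => by simp
  | a :: x, b :: y, c :: z => by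
    have h₁ := shuffleSum_assoc (fun s => F (a :: s)) x (b :: y) (c :: z)
    have h₂ := shuffleSum_assoc (fun s => F (b :: s)) (a :: x) y (c :: z)
    have h₃ := shuffleSum_assoc (fun s => F (c :: s)) (a :: x) (b :: y) z
    simp only [shuffleSum_cons_cons, shuffleSum_add] at h₁ h₂ h₃ ⊢
    rw [h₁, h₂, add_add_add_comm, h₃]
    abel
termination_by x y z => x.length + y.length + z.length

theorem splitSum_add (F G : List ℕ → List ℕ → M) (w : List ℕ) :
    splitSum (fun x y => F x y + G x y) w = splitSum F w + splitSum G w := by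
  induction w generalizing F G with
  | nil => simp [splitSum]
  | cons a w ih =>
    simp only [splitSum, ih]
    abel

theorem map_splitSum (φ : M →+ N) (F : List ℕ → List ℕ → M) (w : List ℕ) :
    φ (splitSum F w) = splitSum (fun x y => φ (F x y)) w := by
  induction w generalizing F with
  | nil => simp [splitSum]
  | cons a w ih => simp [splitSum, ih]

theorem splitSum_congr {F G : List ℕ → List ℕ → M} {w : List ℕ}
    (h : ∀ x y, y ++ x = w → F x y = G x y) : splitSum F w = splitSum G w := by
  induction w generalizing F G with
  | nil => exact h [] [] rfl
  | cons a w ih =>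
    rw [splitSum, splitSum, h (a :: w) [] rfl, ih fun x y e => h x (a :: y) (by simp [e])]

theorem splitSum_assoc (G : List ℕ → List ℕ → List ℕ → M) (w : List ℕ) :
    splitSum (fun x y => splitSum (fun y₁ y₂ => G x y₁ y₂) y) w =
      splitSum (fun x y => splitSum (fun x₁ x₂ => G x₁ x₂ y) x) w := by
  induction w generalizing G with
  | nil => rfl
  | cons a w ih =>
    simp only [splitSum, splitSum_add, ih fun x y z => G x y (a :: z)]
    abel

theorem splitSum_shuffleSum (F : List ℕ → List ℕ → M) (u v : List ℕ) :
    shuffleSum (splitSum F) u v =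
      splitSum (fun x y => splitSum (fun x' y' =>
        shuffleSum (fun s => shuffleSum (F s) y y') x x') v) u := by
  induction u, v using shuffle_induction generalizing F with
  | nil_left v => simp [splitSum]
  | nil_right u => simp [splitSum]
  | cons_cons a u b v ih₁ ih₂ =>
    have e₁ := ih₁ fun x y => F x (a :: y)
    have e₂ := ih₂ fun x y => F x (b :: y)
    simp only [splitSum, shuffleSum_cons_cons, shuffleSum_add, splitSum_add, shuffleSum_nil_left,
      shuffleSum_nil_right] at e₁ e₂ ⊢
    rw [e₁, e₂]
    abel

theorem splitSum_eq_sum_range (F : List ℕ → List ℕ → M) (w : List ℕ) :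
    splitSum F w =
      ∑ p ∈ range (w.length + 1), F (w.drop (w.length - p)) (w.take (w.length - p)) := by
  induction w generalizing F with
  | nil => simp [splitSum]
  | cons a w ih =>
    rw [splitSum, ih, Finset.sum_range_succ _ (a :: w).length, add_comm]
    congr 1
    · refine Finset.sum_congr rfl fun p hp => ?_
      have : (a :: w).length - p = w.length - p + 1 := by
        simp at hp ⊢
        omega
      rw [this, List.drop_succ_cons, List.take_succ_cons]
    · simp

/-! ### Shuffles indexed by sets of positions -/

@[simp]
theorem mergeAt_nil_left (A : Finset ℕ) (v : List ℕ) : mergeAt A [] v = v := by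
  simp [mergeAt]

@[simp]
theorem mergeAt_nil_right (A : Finset ℕ) (u : List ℕ) : mergeAt A u [] = u := by
  cases u <;> simp [mergeAt]

theorem length_mergeAt (A : Finset ℕ) (u v : List ℕ) :
    (mergeAt A u v).length = u.length + v.length := by
  induction u, v using shuffle_induction with
  | nil_left v => simp
  | nil_right u => simp
  | cons_cons a u b v ih₁ ih₂ =>
    rw [mergeAt]
    split_ifs <;> simp only [List.length_cons] at * <;> omega

theorem mergeAt_congr {A B : Finset ℕ} {u v : List ℕ}
    (h : ∀ i ≤ u.length + v.length, i ∈ A ↔ i ∈ B) : mergeAt A u v = mergeAt B u v := by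
  induction u, v using shuffle_induction with
  | nil_left v => simp
  | nil_right u => simp
  | cons_cons a u b v ih₁ ih₂ =>
    simp only [List.length_cons] at ih₁ ih₂ h
    rw [mergeAt, mergeAt, ih₁ fun i hi => h i (by omega), ih₂ fun i hi => h i (by omega),
      if_congr (h _ (by omega)) rfl rfl]

theorem Icc_one_succ (n : ℕ) : Icc 1 (n + 1) = insert (n + 1) (Icc 1 n) :=
  (Finset.insert_Icc_right_eq_Icc_add_one (by omega)).symm

theorem sum_mergeAt (F : List ℕ → M) (u v : List ℕ) :
    ∑ A ∈ powersetCard u.length (Icc 1 (u.length + v.length)), F (mergeAt A u v) =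
      shuffleSum F u v := by
  induction u, v using shuffle_induction generalizing F with
  | nil_left v => simp
  | nil_right u => simp
  | cons_cons a u b v ih₁ ih₂ =>
    set n := u.length + v.length + 1 with hn
    have hn' : n + 1 ∉ Icc 1 n := by simp
    have key : ∀ A : Finset ℕ, A ⊆ Icc 1 n → n + 1 ∉ A := fun A hA h => hn' (hA h)
    have e : (a :: u).length + (b :: v).length = n + 1 := by simp; omega
    have e₁ : u.length + (b :: v).length = n := by simp; omega
    have e₂ : (a :: u).length + v.length = n := by simp; omega
    rw [e₁] at ih₁
    rw [e₂] at ih₂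
    rw [e, shuffleSum_cons_cons, ← ih₁, ← ih₂, Icc_one_succ, List.length_cons,
      powersetCard_succ_insert hn', Finset.sum_union, Finset.sum_image, add_comm]
    · congr 1
      · refine Finset.sum_congr rfl fun A hA => ?_
        rw [mergeAt, if_pos (by simp [hn])]
        rw [mergeAt_congr (B := A)]
        intro i hi
        rw [e₁] at hi
        simp
        omega
      · refine Finset.sum_congr rfl fun A hA => ?_
        rw [mergeAt, if_neg]
        exact key A (mem_powersetCard.1 hA).1
    · intro A hA B hB h
      have hA := key A (mem_powersetCard.1 hA).1
      have hB := key B (mem_powersetCard.1 hB).1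
      rw [← erase_insert hA, ← erase_insert hB, h]
    · rw [Finset.disjoint_left]
      intro A hA hB
      obtain ⟨B, -, rfl⟩ := mem_image.1 hB
      exact key _ (mem_powersetCard.1 hA).1 (mem_insert_self _ _)

end Words

/-! ### The set composition of a word -/

theorem positions_subset (c : ℕ) (w : List ℕ) : positions c w ⊆ Icc 1 w.length := by
  induction w with
  | nil => simp [positions]
  | cons a w ih =>
    rw [List.length_cons, Icc_one_succ, positions]
    split_ifs
    · exact insert_subset_insert _ ih
    · exact ih.trans (subset_insert _ _)

theorem positions_nonempty {c : ℕ} {w : List ℕ} : (positions c w).Nonempty ↔ c ∈ w := by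
  induction w with
  | nil => simp [positions]
  | cons a w ih =>
    rw [positions]
    split_ifs with h
    · simp [h]
    · simp [ih, Ne.symm h]

theorem positions_eq_empty {c : ℕ} {w : List ℕ} (h : c ∉ w) : positions c w = ∅ := by
  rwa [← not_nonempty_iff_eq_empty, positions_nonempty]

theorem disjoint_positions {c d : ℕ} (h : c ≠ d) (w : List ℕ) :
    Disjoint (positions c w) (positions d w) := by
  induction w with
  | nil => simp [positions]
  | cons a w ih =>
    have key : ∀ e, w.length + 1 ∉ positions e w := fun e he => by
      simpa using positions_subset e w he
    rw [positions, positions]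
    split_ifs with h₁ h₂ h₂
    · exact absurd (h₁.symm.trans h₂) h
    · exact disjoint_insert_left.2 ⟨key d, ih⟩
    · exact disjoint_insert_right.2 ⟨key c, ih⟩
    · exact ih

theorem exists_mem_positions {i : ℕ} {w : List ℕ} (h : i ∈ Icc 1 w.length) :
    ∃ c ∈ w, i ∈ positions c w := by
  induction w with
  | nil => simp at h
  | cons a w ih =>
    rw [List.length_cons, Icc_one_succ, mem_insert] at h
    obtain rfl | h := h
    · exact ⟨a, by simp, by simp [positions]⟩
    · obtain ⟨c, hc, hi⟩ := ih h
      refine ⟨c, by simp [hc], ?_⟩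
      rw [positions]
      split_ifs <;> simp [hi]

theorem positions_append (c : ℕ) (y x : List ℕ) :
    positions c (y ++ x) = positions c x ∪ (positions c y).image (· + x.length) := by
  induction y with
  | nil => simp [positions]
  | cons a y ih =>
    rw [List.cons_append, positions, positions, ih]
    split_ifs
    · rw [image_insert, union_insert, List.length_append, Nat.add_right_comm]
    · rfl

theorem le_foldr_max {c : ℕ} {w : List ℕ} (h : c ∈ w) : c ≤ w.foldr max 0 := by
  induction w with
  | nil => simp at h
  | cons a w ih =>
    rw [List.foldr_cons]
    obtain rfl | h := List.mem_cons.1 h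
    · exact le_max_left _ _
    · exact (ih h).trans (le_max_right _ _)

theorem filter_map_positions_eq_nil {L w : List ℕ} (h : ∀ c ∈ L, c ∉ w) :
    (L.map (positions · w)).filter (fun B => decide B.Nonempty) = [] := by
  simp only [List.filter_eq_nil_iff, List.mem_map]
  rintro _ ⟨c, hc, rfl⟩
  simp [positions_nonempty, h c hc]

theorem wordComp_eq {K : ℕ} {w : List ℕ} (h : ∀ c ∈ w, c < K) :
    wordComp w = ((List.range K).map (positions · w)).filter fun B => decide B.Nonempty := by
  have key : ∀ K₁ K₂, K₁ ≤ K₂ → (∀ c ∈ w, c < K₁) →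
      ((List.range K₁).map (positions · w)).filter (fun B => decide B.Nonempty) =
        ((List.range K₂).map (positions · w)).filter fun B => decide B.Nonempty := by
    intro K₁ K₂ hK hw
    obtain ⟨k, rfl⟩ := Nat.exists_eq_add_of_le hK
    rw [List.range_add, List.map_append, List.filter_append,
      filter_map_positions_eq_nil (L := (List.range k).map _), List.append_nil]
    simp only [List.mem_map]
    rintro _ ⟨c, -, rfl⟩ hc
    have := hw _ hc
    omega
  have h' : ∀ c ∈ w, c < w.foldr max 0 + 1 := fun c hc => Nat.lt_succ_of_le (le_foldr_max hc)
  obtain hK | hK := le_total K (w.foldr max 0 + 1)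
  · exact (key _ _ hK h).symm
  · exact key _ _ hK h'

@[simp]
theorem wordComp_nil : wordComp [] = [] := by
  rw [wordComp_eq (K := 0) (by simp)]
  rfl

theorem mem_wordComp {B : Finset ℕ} {w : List ℕ} :
    B ∈ wordComp w ↔ ∃ c ∈ w, positions c w = B := by
  simp only [wordComp, List.mem_filter, List.mem_map, List.mem_range, decide_eq_true_eq]
  constructor
  · rintro ⟨⟨c, -, rfl⟩, h⟩
    exact ⟨c, positions_nonempty.1 h, rfl⟩
  · rintro ⟨c, hc, rfl⟩
    exact ⟨⟨c, Nat.lt_succ_of_le (le_foldr_max hc), rfl⟩, positions_nonempty.2 hc⟩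

theorem mem_ground {i : ℕ} {P : SC} : i ∈ ground P ↔ ∃ B ∈ P, i ∈ B := by
  induction P with
  | nil => simp [ground]
  | cons B P ih =>
    have : ground (B :: P) = B ∪ ground P := rfl
    simp [this, ih]

theorem isSetComp_wordComp (w : List ℕ) : IsSetComp w.length (wordComp w) := by
  refine ⟨fun B hB => ?_, ?_, ?_⟩
  · obtain ⟨c, hc, rfl⟩ := mem_wordComp.1 hB
    exact positions_nonempty.2 hc
  · exact (List.pairwise_map.2 (List.nodup_range.imp fun h => disjoint_positions h w)).filter _
  · ext i
    rw [mem_ground]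
    constructor
    · rintro ⟨B, hB, hi⟩
      obtain ⟨c, hc, rfl⟩ := mem_wordComp.1 hB
      exact positions_subset c w hi
    · intro hi
      obtain ⟨c, hc, h⟩ := exists_mem_positions hi
      exact ⟨_, mem_wordComp.2 ⟨c, hc, rfl⟩, h⟩

theorem IsSetComp.maxG_eq {n : ℕ} {P : SC} (h : IsSetComp n P) : maxG P = n := by
  rw [maxG, h.2.2]
  apply le_antisymm
  · exact Finset.sup_le fun i hi => (mem_Icc.1 hi).2
  · obtain rfl | hn := Nat.eq_zero_or_pos n
    · exact Nat.zero_le _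
    · exact Finset.le_sup (f := id) (mem_Icc.2 ⟨hn, le_rfl⟩)

@[simp]
theorem maxG_wordComp (w : List ℕ) : maxG (wordComp w) = w.length :=
  (isSetComp_wordComp w).maxG_eq

theorem IsSetComp.eq_nil {P : SC} (h : IsSetComp 0 P) : P = [] := by
  rw [List.eq_nil_iff_forall_not_mem]
  intro B hB
  obtain ⟨i, hi⟩ := h.1 B hB
  have : i ∈ ground P := mem_ground.2 ⟨B, hB, hi⟩
  simp [h.2.2] at this

theorem wordComp_eq_nil {w : List ℕ} : wordComp w = [] ↔ w = [] := by
  constructor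
  · intro h
    have := maxG_wordComp w
    rw [h] at this
    exact List.length_eq_zero_iff.1 this.symm
  · rintro rfl
    exact wordComp_nil

/-- The word of length `n` with letter `f i` at position `i`. -/
def wordOf (f : ℕ → ℕ) : ℕ → List ℕ
  | 0 => []
  | n + 1 => f (n + 1) :: wordOf f n

@[simp]
theorem length_wordOf (f : ℕ → ℕ) (n : ℕ) : (wordOf f n).length = n := by
  induction n with
  | zero => rfl
  | succ n ih => simp [wordOf, ih]

theorem positions_wordOf (f : ℕ → ℕ) (c n : ℕ) :
    positions c (wordOf f n) = (Icc 1 n).filter fun i => f i = c := by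
  induction n with
  | zero => rfl
  | succ n ih => rw [wordOf, positions, ih, Icc_one_succ, filter_insert, length_wordOf]

theorem mem_wordOf {f : ℕ → ℕ} {c n : ℕ} : c ∈ wordOf f n ↔ ∃ i ∈ Icc 1 n, f i = c := by
  rw [← positions_nonempty, positions_wordOf, filter_nonempty_iff]

/-- Every set composition comes from a word, whose letters may be chosen arbitrarily large. -/
theorem IsSetComp.exists_word {n : ℕ} {P : SC} (h : IsSetComp n P) (N : ℕ) :
    ∃ w : List ℕ, w.length = n ∧ wordComp w = P ∧ ∀ c ∈ w, N ≤ c := by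
  obtain ⟨hne, hdisj, hground⟩ := h
  set f : ℕ → ℕ := fun i => N + P.findIdx fun B => decide (i ∈ B) with hf
  have hlt : ∀ c ∈ wordOf f n, c < N + P.length := by
    intro c hc
    obtain ⟨i, hi, rfl⟩ := mem_wordOf.1 hc
    rw [← hground, mem_ground] at hi
    obtain ⟨B, hB, hi⟩ := hi
    have := List.findIdx_lt_length_of_exists (p := fun B => decide (i ∈ B)) ⟨B, hB, by simpa⟩
    simp only [hf]
    omega
  have hle : ∀ c ∈ wordOf f n, N ≤ c := by
    intro c hc
    obtain ⟨i, hi, rfl⟩ := mem_wordOf.1 hc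
    exact Nat.le_add_right _ _
  refine ⟨wordOf f n, length_wordOf f n, ?_, hle⟩
  have hP : (List.range P.length).map (fun j => positions (N + j) (wordOf f n)) = P := by
    refine List.ext_getElem (by simp) fun j h₁ h₂ => ?_
    rw [List.getElem_map, List.getElem_range, positions_wordOf]
    ext i
    simp only [mem_filter, hf, Nat.add_left_cancel_iff]
    rw [List.findIdx_eq h₂]
    simp only [decide_eq_true_eq, decide_eq_false_iff_not]
    constructor
    · exact fun h => h.2.1
    · intro hi
      refine ⟨?_, hi, fun k hk hik => ?_⟩
      · rw [← hground, mem_ground]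
        exact ⟨_, List.getElem_mem h₂, hi⟩
      · exact disjoint_left.1 (List.pairwise_iff_getElem.1 hdisj k j _ h₂ hk) hik hi
  rw [wordComp_eq hlt, List.range_add, List.map_append, List.filter_append,
    filter_map_positions_eq_nil (L := List.range N), List.nil_append, List.map_map]
  · change (List.map (fun j => positions (N + j) (wordOf f n)) _).filter _ = P
    rw [hP, List.filter_eq_self]
    simpa using hne
  · intro c hc hc'
    have := hle c hc'
    simp at hc
    omega

/-! ### Restriction -/

theorem filter_nonempty_map_image (f : ℕ → ℕ) (L : SC) :
    (L.map (Finset.image f)).filter (fun B => decide B.Nonempty) =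
      (L.filter fun B => decide B.Nonempty).map (Finset.image f) := by
  rw [List.filter_map]
  congr 2
  ext B
  simp

theorem restrictSC_wordComp {A : Finset ℕ} {w w' : List ℕ} (hw : ∀ c ∈ w', c ∈ w)
    (h : ∀ c, (positions c w ∩ A).image (rankIn A) = positions c w') :
    restrictSC A (wordComp w) = wordComp w' := by
  have hlt : ∀ c ∈ w, c < w.foldr max 0 + 1 := fun c hc => Nat.lt_succ_of_le (le_foldr_max hc)
  rw [wordComp_eq hlt, wordComp_eq fun c hc => hlt c (hw c hc), restrictSC]
  induction List.range (w.foldr max 0 + 1) with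
  | nil => rfl
  | cons c L ih =>
    by_cases hc : (positions c w).Nonempty
    · simp only [List.map_cons, List.filter_cons, hc, decide_true, if_true, h]
      rw [ih]
    · have : ¬ (positions c w').Nonempty := fun hc' =>
        hc (positions_nonempty.2 (hw c (positions_nonempty.1 hc')))
      simp only [List.map_cons, List.filter_cons, hc, this, decide_false]
      simpa using ih

theorem restrictSC_Icc_one (x y : List ℕ) :
    restrictSC (Icc 1 x.length) (wordComp (y ++ x)) = wordComp x := by
  refine restrictSC_wordComp (fun c hc => by simp [hc]) fun c => ?_
  have hx := positions_subset c x
  have : positions c (y ++ x) ∩ Icc 1 x.length = positions c x := by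
    ext i
    have hy := @positions_subset c y
    simp only [positions_append, mem_inter, mem_union, mem_image]
    constructor
    · rintro ⟨h | ⟨j, hj, rfl⟩, hi⟩
      · exact h
      · have := hy hj
        simp only [mem_Icc] at this hi
        omega
    · exact fun h => ⟨Or.inl h, hx h⟩
  rw [this]
  conv_rhs => rw [← image_id (s := positions c x)]
  refine image_congr fun i hi => ?_
  have := mem_Icc.1 (hx hi)
  have e : (Icc 1 x.length).filter (· ≤ i) = Icc 1 i := by
    ext j
    simp only [mem_filter, mem_Icc]
    omega
  simp [rankIn, e]

theorem restrictSC_Icc_succ (x y : List ℕ) :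
    restrictSC (Icc (x.length + 1) (x.length + y.length)) (wordComp (y ++ x)) = wordComp y := by
  refine restrictSC_wordComp (fun c hc => by simp [hc]) fun c => ?_
  have hx := positions_subset c x
  have hy := positions_subset c y
  have : positions c (y ++ x) ∩ Icc (x.length + 1) (x.length + y.length) =
      (positions c y).image (· + x.length) := by
    ext i
    simp only [positions_append, mem_inter, mem_union]
    constructor
    · rintro ⟨h | h, hi⟩
      · have := hx h
        simp only [mem_Icc] at this hi
        omega
      · exact h
    · intro h
      refine ⟨Or.inr h, ?_⟩
      obtain ⟨j, hj, rfl⟩ := mem_image.1 h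
      have := hy hj
      simp only [mem_Icc] at this ⊢
      omega
  rw [this, image_image]
  conv_rhs => rw [← image_id (s := positions c y)]
  refine image_congr fun i hi => ?_
  have := mem_Icc.1 (hy hi)
  have e : (Icc (x.length + 1) (x.length + y.length)).filter (· ≤ i + x.length) =
      Icc (x.length + 1) (i + x.length) := by
    ext j
    simp only [mem_filter, mem_Icc]
    omega
  simp [rankIn, e]

/-! ### Relabelling -/

theorem rankIn_Icc_one {p x : ℕ} (hx : x ≤ p) : rankIn (Icc 1 p) x = x := by
  have : (Icc 1 p).filter (· ≤ x) = Icc 1 x := by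
    ext j
    simp only [mem_filter, mem_Icc]
    omega
  simp [rankIn, this]

theorem sort_insert_max {m : ℕ} {T : Finset ℕ} (h : ∀ t ∈ T, t < m) :
    (insert m T).sort (· ≤ ·) = T.sort (· ≤ ·) ++ [m] := by
  have hm : m ∉ T := fun hm => (h m hm).false
  refine List.Perm.eq_of_pairwise' (pairwise_sort _ _) ?_ ?_
  · rw [List.pairwise_append]
    refine ⟨pairwise_sort _ _, List.pairwise_singleton _ _, fun a ha b hb => ?_⟩
    rw [List.mem_singleton.1 hb]
    exact (h a ((mem_sort _).1 ha)).le
  · rw [List.perm_ext_iff_of_nodup (sort_nodup _ _)]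
    · intro a
      simp [or_comm]
    · rw [List.nodup_append]
      refine ⟨sort_nodup _ _, List.nodup_singleton _, fun a ha b hb => ?_⟩
      rw [List.mem_singleton.1 hb]
      exact (h a ((mem_sort _).1 ha)).ne

theorem relabelFun_insert_of_le {m p x : ℕ} {T : Finset ℕ} (h : ∀ t ∈ T, t < m)
    (hT : T.card = p) (hx : x ∈ Icc 1 p) :
    relabelFun (Icc 1 (p + 1)) (insert m T) x = relabelFun (Icc 1 p) T x := by
  obtain ⟨h₁, h₂⟩ := mem_Icc.1 hx
  rw [relabelFun, relabelFun, rankIn_Icc_one h₂, rankIn_Icc_one (by omega), sort_insert_max h,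
    List.getD_append]
  rw [length_sort, hT]
  omega

theorem relabelFun_insert_top {m p : ℕ} {T : Finset ℕ} (h : ∀ t ∈ T, t < m) (hT : T.card = p) :
    relabelFun (Icc 1 (p + 1)) (insert m T) (p + 1) = m := by
  rw [relabelFun, rankIn_Icc_one le_rfl, sort_insert_max h, List.getD_append_right] <;>
    simp [hT]

theorem relabelFun_Icc_one {n x : ℕ} (hx : x ∈ Icc 1 n) :
    relabelFun (Icc 1 n) (Icc 1 n) x = x := by
  induction n with
  | zero => simp at hx
  | succ n ih =>
    have h : ∀ t ∈ Icc 1 n, t < n + 1 := fun t ht => Nat.lt_succ_of_le (mem_Icc.1 ht).2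
    have hc : (Icc 1 n).card = n := by simp
    rw [Icc_one_succ, mem_insert] at hx
    obtain rfl | hx := hx
    · conv_lhs => rw [Icc_one_succ n, ← Icc_one_succ]
      nth_rewrite 2 [Icc_one_succ]
      exact relabelFun_insert_top h hc
    · nth_rewrite 2 [Icc_one_succ]
      rw [relabelFun_insert_of_le h hc hx, ih hx]

theorem image_relabelFun_Icc_one (c : ℕ) (w : List ℕ) :
    (positions c w).image (relabelFun (Icc 1 w.length) (Icc 1 w.length)) = positions c w := by
  conv_rhs => rw [← image_id (s := positions c w)]
  exact image_congr fun i hi => relabelFun_Icc_one (positions_subset c w hi)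

theorem image_relabelFun_cons {m a c : ℕ} {u : List ℕ} {T : Finset ℕ} (h : ∀ t ∈ T, t < m)
    (hT : T.card = u.length) :
    (positions c (a :: u)).image (relabelFun (Icc 1 (u.length + 1)) (insert m T)) =
      if a = c then insert m ((positions c u).image (relabelFun (Icc 1 u.length) T))
      else (positions c u).image (relabelFun (Icc 1 u.length) T) := by
  have key : (positions c u).image (relabelFun (Icc 1 (u.length + 1)) (insert m T)) =
      (positions c u).image (relabelFun (Icc 1 u.length) T) :=
    image_congr fun i hi => relabelFun_insert_of_le h hT (positions_subset c u hi)
  rw [positions]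
  split_ifs
  · rw [image_insert, key, relabelFun_insert_top h hT]
  · exact key

theorem positions_mergeAt (c : ℕ) {u v : List ℕ} {A : Finset ℕ}
    (hA : A ⊆ Icc 1 (u.length + v.length)) (hc : A.card = u.length) :
    positions c (mergeAt A u v) =
      (positions c u).image (relabelFun (Icc 1 u.length) A) ∪
        (positions c v).image (relabelFun (Icc 1 v.length) (Icc 1 (u.length + v.length) \ A)) := by
  induction u, v using shuffle_induction generalizing A with
  | nil_left v =>
    obtain rfl : A = ∅ := by simpa using hc
    simp [positions, image_relabelFun_Icc_one]
  | nil_right u =>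
    obtain rfl : A = Icc 1 u.length := eq_of_subset_of_card_le hA (by simp [hc])
    simp [positions, image_relabelFun_Icc_one]
  | cons_cons a u b v ih₁ ih₂ =>
    set n := u.length + v.length + 1 with hn
    have e : (a :: u).length + (b :: v).length = n + 1 := by simp; omega
    have e₁ : u.length + (b :: v).length = n := by simp; omega
    have e₂ : (a :: u).length + v.length = n := by simp; omega
    rw [e₁] at ih₁
    rw [e₂] at ih₂
    rw [e] at hA ⊢
    have hlt : ∀ T ⊆ Icc 1 n, ∀ t ∈ T, t < n + 1 := fun T hT t ht =>
      Nat.lt_succ_of_le (mem_Icc.1 (hT ht)).2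
    rw [mergeAt]
    by_cases hmem : n + 1 ∈ A
    · rw [if_pos hmem]
      obtain ⟨B, hB, rfl⟩ : ∃ B, n + 1 ∉ B ∧ A = insert (n + 1) B :=
        ⟨A.erase (n + 1), notMem_erase _ _, (insert_erase hmem).symm⟩
      have hBs : B ⊆ Icc 1 n := by
        rw [Icc_one_succ] at hA
        exact (insert_subset_insert_iff hB).1 hA
      have hBc : B.card = u.length := by simpa [card_insert_of_notMem hB] using hc
      have hmerge : mergeAt (insert (n + 1) B) u (b :: v) = mergeAt B u (b :: v) := by
        refine mergeAt_congr fun i hi => ?_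
        rw [e₁] at hi
        simp
        omega
      have hd : Icc 1 (n + 1) \ insert (n + 1) B = Icc 1 n \ B := by
        ext i
        simp only [mem_sdiff, mem_Icc, mem_insert]
        grind
      rw [hmerge, List.length_cons, image_relabelFun_cons (hlt B hBs) hBc, positions,
        length_mergeAt, e₁, ih₁ hBs hBc, hd]
      split_ifs
      · rw [insert_union, List.length_cons]
      · rfl
    · rw [if_neg hmem]
      have hAs : A ⊆ Icc 1 n := by
        rw [Icc_one_succ] at hA
        exact (subset_insert_iff_of_notMem hmem).1 hA
      have hd : Icc 1 (n + 1) \ A = insert (n + 1) (Icc 1 n \ A) := by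
        rw [Icc_one_succ, insert_sdiff_of_notMem _ hmem]
      have hcc : (Icc 1 n \ A).card = v.length := by
        rw [card_sdiff_of_subset hAs, hc]
        simp [hn]
      rw [hd, List.length_cons (as := v), image_relabelFun_cons (hlt _ sdiff_subset) hcc, positions,
        length_mergeAt, e₂, ih₂ hAs hc]
      split_ifs
      · rw [union_insert]
      · rfl

theorem relabelSC_wordComp_append {A : Finset ℕ} {u v : List ℕ} {N : ℕ}
    (hA : A ⊆ Icc 1 (u.length + v.length)) (hc : A.card = u.length)
    (hu : ∀ c ∈ u, c < N) (hv : ∀ c ∈ v, N ≤ c) :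
    relabelSC (Icc 1 u.length) A (wordComp u) ++
        relabelSC (Icc 1 v.length) (Icc 1 (u.length + v.length) \ A) (wordComp v) =
      wordComp (mergeAt A u v) := by
  have hpos := fun c => positions_mergeAt c hA hc
  have hmem : ∀ c ∈ mergeAt A u v, c ∈ u ∨ c ∈ v := by
    intro c h
    by_contra! hn
    rw [← positions_nonempty, hpos, positions_eq_empty hn.1, positions_eq_empty hn.2] at h
    simp at h
  set K := v.foldr max 0 + 1
  have hK : ∀ c ∈ v, c < N + K := fun c hc => by
    have := le_foldr_max hc
    omega
  have hm : ∀ c ∈ mergeAt A u v, c < N + K := fun c h => (hmem c h).elim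
    (fun h => (hu c h).trans_le (Nat.le_add_right _ _)) (hK c)
  rw [wordComp_eq hu, wordComp_eq hK, wordComp_eq hm, List.range_add, List.map_append,
    List.map_append, List.filter_append, List.filter_append,
    filter_map_positions_eq_nil (w := v) (L := List.range N), List.nil_append, relabelSC,
    relabelSC, ← filter_nonempty_map_image, ← filter_nonempty_map_image, List.map_map,
    List.map_map]
  · congr 2
    · refine List.map_congr_left fun c h => ?_
      have hcv : c ∉ v := fun h' => by
        have := hv c h'
        have := List.mem_range.1 h
        omega
      simp [hpos, positions_eq_empty hcv]
    · refine List.map_congr_left fun c h => ?_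
      have hcu : c ∉ u := fun h' => by
        have := hu c h'
        obtain ⟨j, -, rfl⟩ := List.mem_map.1 h
        omega
      simp [hpos, positions_eq_empty hcu]
  · intro c h h'
    have := hv c h'
    have := List.mem_range.1 h
    omega

/-! ### Products and coproducts of basis elements -/

/-- The basis element of `T_•` attached to a word. -/
noncomputable def wordBasis (w : List ℕ) : FM ℤ := Finsupp.single (wordComp w) 1

theorem wordBasis_nil : wordBasis [] = Finsupp.single [] 1 := by
  rw [wordBasis, wordComp_nil]

theorem hatL_single (P Q : SC) :
    hatL ℤ (Finsupp.single P 1) (Finsupp.single Q 1) = hatB ℤ P Q := by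
  simp [hatL]

theorem hatB_wordComp {u v : List ℕ} {N : ℕ} (hu : ∀ c ∈ u, c < N) (hv : ∀ c ∈ v, N ≤ c) :
    hatB ℤ (wordComp u) (wordComp v) = shuffleSum wordBasis u v := by
  rw [hatB, maxG_wordComp, maxG_wordComp, ← sum_mergeAt, powersetCard_eq_filter]
  refine Finset.sum_congr rfl fun A hA => ?_
  rw [mem_filter, mem_powerset] at hA
  rw [relabelSC_wordComp_append hA.1 hA.2 hu hv, wordBasis]

theorem hatL_wordBasis {u v : List ℕ} {N : ℕ} (hu : ∀ c ∈ u, c < N) (hv : ∀ c ∈ v, N ≤ c) :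
    hatL ℤ (wordBasis u) (wordBasis v) = shuffleSum wordBasis u v := by
  rw [wordBasis, wordBasis, hatL_single, hatB_wordComp hu hv]

theorem restrictSC_eq_drop_take {w : List ℕ} {p : ℕ} (hp : p ≤ w.length) :
    restrictSC (Icc 1 p) (wordComp w) = wordComp (w.drop (w.length - p)) ∧
      restrictSC (Icc (p + 1) w.length) (wordComp w) = wordComp (w.take (w.length - p)) := by
  set x := w.drop (w.length - p) with hx
  set y := w.take (w.length - p) with hy
  have hw : y ++ x = w := List.take_append_drop _ _
  have hxl : x.length = p := by simp [hx]; omega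
  have hl : w.length = x.length + y.length := by rw [← hw, List.length_append, add_comm]
  rw [hl, ← hxl, ← hw]
  exact ⟨restrictSC_Icc_one x y, restrictSC_Icc_succ x y⟩

theorem splitSum_wordComp {M : Type*} [AddCommMonoid M] (F : ℕ → SC → SC → M) (w : List ℕ) :
    splitSum (fun x y => F x.length (wordComp x) (wordComp y)) w =
      ∑ p ∈ range (w.length + 1),
        F p (restrictSC (Icc 1 p) (wordComp w)) (restrictSC (Icc (p + 1) w.length) (wordComp w)) := by
  rw [splitSum_eq_sum_range]
  refine Finset.sum_congr rfl fun p hp => ?_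
  have hp : p ≤ w.length := Nat.lt_succ_iff.1 (mem_range.1 hp)
  rw [(restrictSC_eq_drop_take hp).1, (restrictSC_eq_drop_take hp).2, List.length_drop,
    Nat.sub_sub_self hp]

theorem dBarL_wordBasis (w : List ℕ) :
    dBarL ℤ (wordBasis w) =
      splitSum (fun x y => Finsupp.single (wordComp x, wordComp y) 1) w := by
  rw [splitSum_wordComp fun _ P Q => Finsupp.single (P, Q) (1 : ℤ)]
  simp [dBarL, wordBasis]

/-- Two set compositions come from words with the letters of the second one being larger. -/
theorem exists_words {p q : ℕ} {P Q : SC} (hP : IsSetComp p P) (hQ : IsSetComp q Q) :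
    ∃ (u v : List ℕ) (N : ℕ), u.length = p ∧ v.length = q ∧ wordComp u = P ∧ wordComp v = Q ∧
      (∀ c ∈ u, c < N) ∧ ∀ c ∈ v, N ≤ c := by
  obtain ⟨u, hul, hu, -⟩ := hP.exists_word 0
  obtain ⟨v, hvl, hv, hvN⟩ := hQ.exists_word (u.foldr max 0 + 1)
  exact ⟨u, v, _, hul, hvl, hu, hv, fun c hc => Nat.lt_succ_of_le (le_foldr_max hc), hvN⟩

theorem hatL_mem_span {p q : ℕ} {P Q : SC} (hP : IsSetComp p P) (hQ : IsSetComp q Q) :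
    hatL ℤ (Finsupp.single P 1) (Finsupp.single Q 1) ∈ Submodule.span ℤ
      {f : FM ℤ | ∃ U : SC, IsSetComp (p + q) U ∧ f = Finsupp.single U 1} := by
  obtain ⟨u, v, N, rfl, rfl, rfl, rfl, hu, hv⟩ := exists_words hP hQ
  rw [hatL_single, hatB_wordComp hu hv, ← sum_mergeAt]
  refine Submodule.sum_mem _ fun A _ => Submodule.subset_span ⟨_, ?_, rfl⟩
  rw [← length_mergeAt A]
  exact isSetComp_wordComp _

theorem wordBasis_mem_Tspan (w : List ℕ) : wordBasis w ∈ Tspan ℤ :=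
  Submodule.subset_span ⟨_, _, isSetComp_wordComp w, rfl⟩

/-- Induction for `T_•`: it suffices to treat words with large letters. -/
theorem Tspan_induction {p : ∀ x : FM ℤ, x ∈ Tspan ℤ → Prop} (N : ℕ)
    (word : ∀ w : List ℕ, (∀ c ∈ w, N ≤ c) → p (wordBasis w) (wordBasis_mem_Tspan w))
    (zero : p 0 (zero_mem _))
    (add : ∀ x y hx hy, p x hx → p y hy → p (x + y) (add_mem hx hy))
    (smul : ∀ (a : ℤ) x hx, p x hx → p (a • x) (Submodule.smul_mem _ a hx))
    {x : FM ℤ} (hx : x ∈ Tspan ℤ) : p x hx := by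
  induction hx using Submodule.span_induction with
  | mem x h =>
    obtain ⟨n, P, hP, rfl⟩ := h
    obtain ⟨w, -, rfl, hw⟩ := hP.exists_word N
    exact word w hw
  | zero => exact zero
  | add x y hx hy hpx hpy => exact add x y hx hy hpx hpy
  | smul a x hx hpx => exact smul a x hx hpx

theorem hatL_mem_Tspan {x y : FM ℤ} (hx : x ∈ Tspan ℤ) (hy : y ∈ Tspan ℤ) :
    hatL ℤ x y ∈ Tspan ℤ := by
  induction hx using Tspan_induction 0 with
  | word u _ =>
    induction hy using Tspan_induction 0 with
    | word v _ =>
      refine Submodule.span_mono ?_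
        (hatL_mem_span (isSetComp_wordComp u) (isSetComp_wordComp v))
      rintro _ ⟨U, hU, rfl⟩
      exact ⟨_, U, hU, rfl⟩
    | zero => simp
    | add x y _ _ hx hy => simpa using add_mem hx hy
    | smul a x _ hx => simpa using Submodule.smul_mem _ a hx
  | zero => simp
  | add x y _ _ hx hy => simpa using add_mem hx hy
  | smul a x _ hx => simpa using Submodule.smul_mem _ a hx

theorem hatL_assoc {x y z : FM ℤ} (hx : x ∈ Tspan ℤ) (hy : y ∈ Tspan ℤ) (hz : z ∈ Tspan ℤ) :
    hatL ℤ (hatL ℤ x y) z = hatL ℤ x (hatL ℤ y z) := by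
  induction hx using Tspan_induction 0 with
  | word u _ =>
    induction hy using Tspan_induction (u.foldr max 0 + 1) with
    | word v hv =>
      induction hz using Tspan_induction (max (u.foldr max 0 + 1) (v.foldr max 0 + 1)) with
      | word w hw =>
        have hu : ∀ c ∈ u, c < u.foldr max 0 + 1 := fun c hc => Nat.lt_succ_of_le (le_foldr_max hc)
        have hv' : ∀ c ∈ v, c < v.foldr max 0 + 1 := fun c hc =>
          Nat.lt_succ_of_le (le_foldr_max hc)
        rw [hatL_wordBasis hu hv, hatL_wordBasis hv' fun c hc => (le_max_right _ _).trans (hw c hc)]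
        have h₁ := map_shuffleSum ((hatL ℤ).flip (wordBasis w)).toAddMonoidHom wordBasis u v
        have h₂ := map_shuffleSum (hatL ℤ (wordBasis u)).toAddMonoidHom wordBasis v w
        simp only [LinearMap.toAddMonoidHom_coe, LinearMap.flip_apply] at h₁ h₂
        rw [h₁, h₂, shuffleSum_congr (G := fun s => shuffleSum wordBasis s w), shuffleSum_assoc]
        · refine shuffleSum_congr fun s _ hs => (hatL_wordBasis hu fun c hc => ?_).symm
          exact (hs c hc).elim (hv c) fun h => (le_max_left _ _).trans (hw c h)
        · refine fun s _ hs => hatL_wordBasis (fun c hc => ?_) hw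
          exact (hs c hc).elim (fun h => (hu c h).trans_le (le_max_left _ _))
            fun h => (hv' c h).trans_le (le_max_right _ _)
      | zero => simp
      | add x y _ _ hx hy => simp [hx, hy]
      | smul a x _ hx => simp only [map_smul, hx]
    | zero => simp
    | add x y _ _ hx hy => simp [hx, hy]
    | smul a x _ hx => simp only [map_smul, LinearMap.smul_apply, hx]
  | zero => simp
  | add x y _ _ hx hy => simp [hx, hy]
  | smul a x _ hx => simp only [map_smul, LinearMap.smul_apply, hx]

theorem one_hatL {x : FM ℤ} (hx : x ∈ Tspan ℤ) : hatL ℤ (Finsupp.single [] 1) x = x := by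
  induction hx using Tspan_induction 0 with
  | word w hw => rw [← wordBasis_nil, hatL_wordBasis (N := 0) (by simp) hw, shuffleSum_nil_left]
  | zero => simp
  | add x y _ _ hx hy => rw [map_add, hx, hy]
  | smul a x _ hx => rw [map_smul, hx]

theorem hatL_one {x : FM ℤ} (hx : x ∈ Tspan ℤ) : hatL ℤ x (Finsupp.single [] 1) = x := by
  induction hx using Tspan_induction 0 with
  | word w hw =>
    rw [← wordBasis_nil, hatL_wordBasis (fun c hc => Nat.lt_succ_of_le (le_foldr_max hc)) (by simp),
      shuffleSum_nil_right]
  | zero => simp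
  | add x y _ _ hx hy => rw [map_add, LinearMap.add_apply, hx, hy]
  | smul a x _ hx => rw [map_smul, LinearMap.smul_apply, hx]

/-! ### The coalgebra structure -/

theorem splitSum_ite_left {M : Type*} [AddCommMonoid M] (F : List ℕ → List ℕ → M) (w : List ℕ) :
    splitSum (fun x y => if x = [] then F x y else 0) w = F [] w := by
  induction w generalizing F with
  | nil => simp [splitSum]
  | cons a w ih => simp [splitSum, ih fun x y => F x (a :: y)]

theorem splitSum_ite_right {M : Type*} [AddCommMonoid M] (F : List ℕ → List ℕ → M) (w : List ℕ) :
    splitSum (fun x y => if y = [] then F x y else 0) w = F w [] := by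
  cases w with
  | nil => simp [splitSum]
  | cons a w =>
    have h : splitSum (fun _ _ => (0 : M)) w = 0 := by
      simpa using (map_splitSum (0 : M →+ M) F w).symm
    simp [splitSum, h]

theorem applyFst_dBarL (w : List ℕ) :
    applyFst ℤ (dBarL ℤ) (dBarL ℤ (wordBasis w)) = splitSum (fun x y => splitSum (fun x₁ x₂ =>
      Finsupp.single (wordComp x₁, wordComp x₂, wordComp y) 1) x) w := by
  have h := map_splitSum (applyFst ℤ (dBarL ℤ)).toAddMonoidHom
    (fun x y => Finsupp.single (wordComp x, wordComp y) 1) w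
  rw [← dBarL_wordBasis] at h
  refine h.trans (splitSum_congr fun x y _ => ?_)
  have h' := map_splitSum (Finsupp.mapDomain.addMonoidHom fun S : SC × SC => (S.1, S.2, wordComp y))
    (fun x y => Finsupp.single (wordComp x, wordComp y) (1 : ℤ)) x
  rw [← dBarL_wordBasis] at h'
  simpa [applyFst, wordBasis] using h'

theorem applySnd_dBarL (w : List ℕ) :
    applySnd ℤ (dBarL ℤ) (dBarL ℤ (wordBasis w)) = splitSum (fun x y => splitSum (fun y₁ y₂ =>
      Finsupp.single (wordComp x, wordComp y₁, wordComp y₂) 1) y) w := by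
  have h := map_splitSum (applySnd ℤ (dBarL ℤ)).toAddMonoidHom
    (fun x y => Finsupp.single (wordComp x, wordComp y) 1) w
  rw [← dBarL_wordBasis] at h
  refine h.trans (splitSum_congr fun x y _ => ?_)
  have h' := map_splitSum (Finsupp.mapDomain.addMonoidHom fun S : SC × SC => (wordComp x, S.1, S.2))
    (fun x y => Finsupp.single (wordComp x, wordComp y) (1 : ℤ)) y
  rw [← dBarL_wordBasis] at h'
  simpa [applySnd, wordBasis] using h'

theorem epsFst_dBarL (w : List ℕ) : epsFst ℤ (dBarL ℤ (wordBasis w)) = wordBasis w := by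
  have h := map_splitSum (epsFst ℤ).toAddMonoidHom
    (fun x y => Finsupp.single (wordComp x, wordComp y) 1) w
  rw [← dBarL_wordBasis] at h
  refine h.trans ?_
  simp only [LinearMap.toAddMonoidHom_coe, epsFst, Finsupp.lift_apply, Finsupp.sum_single_index,
    zero_smul, one_smul, wordComp_eq_nil]
  exact splitSum_ite_left (fun _ y => wordBasis y) w

theorem epsSnd_dBarL (w : List ℕ) : epsSnd ℤ (dBarL ℤ (wordBasis w)) = wordBasis w := by
  have h := map_splitSum (epsSnd ℤ).toAddMonoidHom
    (fun x y => Finsupp.single (wordComp x, wordComp y) 1) w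
  rw [← dBarL_wordBasis] at h
  refine h.trans ?_
  simp only [LinearMap.toAddMonoidHom_coe, epsSnd, Finsupp.lift_apply, Finsupp.sum_single_index,
    zero_smul, one_smul, wordComp_eq_nil]
  exact splitSum_ite_right (fun x _ => wordBasis x) w

/-! ### Compatibility of the product and the coproduct -/

theorem tensor2_add_left (x x' y : FM ℤ) :
    tensor2 ℤ (x + x') y = tensor2 ℤ x y + tensor2 ℤ x' y := by
  simp only [tensor2]
  rw [Finsupp.sum_add_index'] <;> simp [add_mul, Finsupp.sum_add]

theorem tensor2_add_right (x y y' : FM ℤ) :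
    tensor2 ℤ x (y + y') = tensor2 ℤ x y + tensor2 ℤ x y' := by
  simp only [tensor2]
  rw [← Finsupp.sum_add]
  refine Finsupp.sum_congr fun U _ => ?_
  rw [Finsupp.sum_add_index'] <;> simp [mul_add]

theorem tensor2_shuffleSum (x x' y y' : List ℕ) :
    tensor2 ℤ (shuffleSum wordBasis x x') (shuffleSum wordBasis y y') =
      shuffleSum (fun s => shuffleSum (fun t => Finsupp.single (wordComp s, wordComp t) 1) y y')
        x x' := by
  refine (map_shuffleSum (AddMonoidHom.mk' (tensor2 ℤ · (shuffleSum wordBasis y y'))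
    fun a b => tensor2_add_left a b _) wordBasis x x').trans ?_
  refine shuffleSum_congr fun s _ _ => ?_
  refine (map_shuffleSum (AddMonoidHom.mk' (tensor2 ℤ (wordBasis s))
    fun a b => tensor2_add_right _ a b) wordBasis y y').trans ?_
  refine shuffleSum_congr fun t _ _ => ?_
  change tensor2 ℤ (wordBasis s) (wordBasis t) = _
  simp only [tensor2, wordBasis]
  rw [Finsupp.sum_single_index, Finsupp.sum_single_index, mul_one] <;> simp

theorem mul2hat_single (P Q P' Q' : SC) :
    mul2hat ℤ (Finsupp.single (P, Q) 1) (Finsupp.single (P', Q') 1) =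
      tensor2 ℤ (hatB ℤ P P') (hatB ℤ Q Q') := by
  simp [mul2hat]

theorem dBarL_hatL {p q : ℕ} {P Q : SC} (hP : IsSetComp p P) (hQ : IsSetComp q Q) :
    dBarL ℤ (hatL ℤ (Finsupp.single P 1) (Finsupp.single Q 1)) =
      mul2hat ℤ (dBarL ℤ (Finsupp.single P 1)) (dBarL ℤ (Finsupp.single Q 1)) := by
  obtain ⟨u, v, N, rfl, rfl, rfl, rfl, hu, hv⟩ := exists_words hP hQ
  rw [hatL_single, hatB_wordComp hu hv, ← wordBasis, ← wordBasis, dBarL_wordBasis u]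
  refine (map_shuffleSum (dBarL ℤ).toAddMonoidHom wordBasis u v).trans ?_
  refine Eq.trans ?_ (map_splitSum ((mul2hat ℤ).flip (dBarL ℤ (wordBasis v))).toAddMonoidHom _
    u).symm
  simp only [LinearMap.toAddMonoidHom_coe, dBarL_wordBasis, splitSum_shuffleSum,
    LinearMap.flip_apply]
  refine splitSum_congr fun x y hxy => ?_
  refine Eq.trans ?_ (map_splitSum (mul2hat ℤ (Finsupp.single (wordComp x, wordComp y) 1)
    ).toAddMonoidHom _ v).symm
  refine splitSum_congr fun x' y' hxy' => ?_
  rw [LinearMap.toAddMonoidHom_coe, mul2hat_single, hatB_wordComp (N := N), hatB_wordComp (N := N),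
    tensor2_shuffleSum]
  · exact fun c hc => hu c (by simp [← hxy, hc])
  · exact fun c hc => hv c (by simp [← hxy', hc])
  · exact fun c hc => hu c (by simp [← hxy, hc])
  · exact fun c hc => hv c (by simp [← hxy', hc])

theorem counitL_wordBasis (w : List ℕ) : counitL ℤ (wordBasis w) = if w = [] then 1 else 0 := by
  simp only [counitL, wordBasis, wordComp_eq_nil, Finsupp.lift_apply, Finsupp.sum_single_index,
    zero_smul, one_smul]

theorem counitL_hatL {p q : ℕ} {P Q : SC} (hP : IsSetComp p P) (hQ : IsSetComp q Q) :
    counitL ℤ (hatL ℤ (Finsupp.single P 1) (Finsupp.single Q 1)) =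
      counitL ℤ (Finsupp.single P 1) * counitL ℤ (Finsupp.single Q 1) := by
  obtain ⟨u, v, N, rfl, rfl, rfl, rfl, hu, hv⟩ := exists_words hP hQ
  rw [hatL_single, hatB_wordComp hu hv, ← wordBasis, ← wordBasis, counitL_wordBasis,
    counitL_wordBasis]
  refine (map_shuffleSum (counitL ℤ).toAddMonoidHom wordBasis u v).trans ?_
  simp only [LinearMap.toAddMonoidHom_coe, counitL_wordBasis]
  cases u with
  | nil => simp
  | cons a u =>
    rw [shuffleSum_congr (G := fun _ => (0 : ℤ →+ ℤ) 0), ← map_shuffleSum]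
    · simp
    · intro s hs _
      rw [if_neg]
      · rfl
      · rintro rfl
        simp at hs
        omega

/-! ### The antipode -/

/-- The left convolution inverse of the identity on compositions of degree `n`. -/
noncomputable def leftAntipode : ℕ → SC → FM ℤ
  | 0, _ => Finsupp.single [] 1
  | n + 1, P => -∑ p : Fin (n + 1), hatL ℤ (leftAntipode p (restrictSC (Icc 1 p) P))
      (Finsupp.single (restrictSC (Icc (p + 1) (n + 1)) P) 1)
termination_by n => n
decreasing_by exact p.2

/-- The right convolution inverse of the identity, as a function of words. -/
noncomputable def rightAntipode : List ℕ → FM ℤ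
  | [] => Finsupp.single [] 1
  | a :: w => -∑ k : Fin (w.length + 1), hatL ℤ (wordBasis ((a :: w).drop k))
      (rightAntipode ((a :: w).take k))
termination_by w => w.length
decreasing_by
  have := k.2
  simp only [List.length_take, List.length_cons]
  omega

theorem leftAntipode_mem (w : List ℕ) : leftAntipode w.length (wordComp w) ∈ Tspan ℤ := by
  induction h : w.length using Nat.strong_induction_on generalizing w with
  | _ n ih =>
    cases n with
    | zero =>
      rw [leftAntipode, ← wordBasis_nil]
      exact wordBasis_mem_Tspan _
    | succ n =>
      rw [leftAntipode]
      refine neg_mem (sum_mem fun p _ => ?_)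
      have hr := restrictSC_eq_drop_take (w := w) (p := p) (by omega)
      rw [h] at hr
      rw [hr.1, hr.2]
      exact hatL_mem_Tspan (ih p p.2 _ (by simp; omega)) (wordBasis_mem_Tspan _)

theorem splitSum_leftAntipode (w : List ℕ) :
    splitSum (fun x y => hatL ℤ (leftAntipode x.length (wordComp x)) (wordBasis y)) w =
      if w = [] then Finsupp.single [] 1 else 0 := by
  cases h : w with
  | nil =>
    have := hatL_one (wordBasis_mem_Tspan [])
    simpa [splitSum, leftAntipode, wordBasis_nil] using this
  | cons a v =>
    rw [← h]
    refine (splitSum_wordComp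
      (fun p P Q => hatL ℤ (leftAntipode p P) (Finsupp.single Q (1 : ℤ))) w).trans ?_
    have h₁ := restrictSC_Icc_one w []
    have h₂ := restrictSC_Icc_succ w []
    rw [List.nil_append, List.length_nil, add_zero, wordComp_nil] at h₂
    rw [List.nil_append] at h₁
    have hw : w.length = v.length + 1 := by simp [h]
    rw [Finset.sum_range_succ, h₁, h₂, hatL_one (leftAntipode_mem w), hw, leftAntipode,
      Fin.sum_univ_eq_sum_range (fun p => hatL ℤ (leftAntipode p (restrictSC (Icc 1 p) (wordComp w)))
        (Finsupp.single (restrictSC (Icc (p + 1) (v.length + 1)) (wordComp w)) 1)),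
      add_neg_cancel, if_neg (by simp [h])]

theorem rightAntipode_mem : ∀ w : List ℕ, rightAntipode w ∈ Tspan ℤ
  | [] => by
    rw [rightAntipode, ← wordBasis_nil]
    exact wordBasis_mem_Tspan _
  | a :: w => by
    rw [rightAntipode]
    exact neg_mem (sum_mem fun k _ => hatL_mem_Tspan (wordBasis_mem_Tspan _)
      (rightAntipode_mem ((a :: w).take k)))
termination_by w => w.length
decreasing_by
  simp only [List.length_take, List.length_cons]
  omega

theorem splitSum_rightAntipode (w : List ℕ) :
    splitSum (fun x y => hatL ℤ (wordBasis x) (rightAntipode y)) w =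
      if w = [] then Finsupp.single [] 1 else 0 := by
  cases w with
  | nil =>
    have := hatL_one (wordBasis_mem_Tspan [])
    simpa [splitSum, rightAntipode, wordBasis_nil] using this
  | cons a w =>
    rw [splitSum_eq_sum_range, ← Finset.sum_range_reflect,
      Finset.sum_congr rfl (g := fun k => hatL ℤ (wordBasis ((a :: w).drop k))
        (rightAntipode ((a :: w).take k)))]
    · rw [Finset.sum_range_succ, List.drop_length, List.take_length, wordBasis_nil,
        one_hatL (rightAntipode_mem _), rightAntipode, List.length_cons,
        Fin.sum_univ_eq_sum_range (fun k => hatL ℤ (wordBasis ((a :: w).drop k))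
          (rightAntipode ((a :: w).take k))), add_neg_cancel, if_neg (by simp)]
    · intro k hk
      have hk := mem_range.1 hk
      have : (a :: w).length - ((a :: w).length + 1 - 1 - k) = k := by omega
      rw [this]

theorem leftAntipode_eq_rightAntipode (w : List ℕ) :
    leftAntipode w.length (wordComp w) = rightAntipode w := by
  calc leftAntipode w.length (wordComp w)
      = splitSum (fun x y => if y = [] then leftAntipode x.length (wordComp x) else 0) w :=
        (splitSum_ite_right (fun x _ => leftAntipode x.length (wordComp x)) w).symm
    _ = splitSum (fun x y => splitSum (fun y₁ y₂ =>
          hatL ℤ (leftAntipode x.length (wordComp x)) (hatL ℤ (wordBasis y₁) (rightAntipode y₂))) y)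
          w := by
        refine splitSum_congr fun x y _ => ?_
        have h := map_splitSum (hatL ℤ (leftAntipode x.length (wordComp x))).toAddMonoidHom
          (fun y₁ y₂ => hatL ℤ (wordBasis y₁) (rightAntipode y₂)) y
        rw [splitSum_rightAntipode] at h
        refine Eq.trans ?_ h
        split_ifs
        · exact (hatL_one (leftAntipode_mem x)).symm
        · exact (map_zero _).symm
    _ = splitSum (fun x y => splitSum (fun x₁ x₂ =>
          hatL ℤ (hatL ℤ (leftAntipode x₁.length (wordComp x₁)) (wordBasis x₂)) (rightAntipode y)) x)
          w := by
        rw [splitSum_assoc fun x y z =>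
          hatL ℤ (leftAntipode x.length (wordComp x)) (hatL ℤ (wordBasis y) (rightAntipode z))]
        exact splitSum_congr fun x y _ => splitSum_congr fun x₁ x₂ _ =>
          (hatL_assoc (leftAntipode_mem x₁) (wordBasis_mem_Tspan x₂) (rightAntipode_mem y)).symm
    _ = splitSum (fun x y => if x = [] then rightAntipode y else 0) w := by
        refine splitSum_congr fun x y _ => ?_
        have h := map_splitSum ((hatL ℤ).flip (rightAntipode y)).toAddMonoidHom
          (fun x₁ x₂ => hatL ℤ (leftAntipode x₁.length (wordComp x₁)) (wordBasis x₂)) x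
        rw [splitSum_leftAntipode] at h
        refine h.symm.trans ?_
        split_ifs
        · exact one_hatL (rightAntipode_mem y)
        · exact map_zero _
    _ = rightAntipode w := splitSum_ite_left (fun _ y => rightAntipode y) w

/-- The antipode of `(T_•, ∗̂, δ̄)`. -/
noncomputable def antipode : FM ℤ →ₗ[ℤ] FM ℤ :=
  Finsupp.lift _ ℤ SC fun P => leftAntipode (maxG P) P

theorem antipode_single_wordComp (w : List ℕ) :
    antipode (Finsupp.single (wordComp w) 1) = leftAntipode w.length (wordComp w) := by
  simp [antipode]

theorem convHatFst_antipode (w : List ℕ) :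
    convHatFst ℤ antipode (dBarL ℤ (wordBasis w)) =
      counitL ℤ (wordBasis w) • Finsupp.single ([] : SC) 1 := by
  have h := map_splitSum (convHatFst ℤ antipode).toAddMonoidHom
    (fun x y => Finsupp.single (wordComp x, wordComp y) 1) w
  rw [← dBarL_wordBasis] at h
  rw [counitL_wordBasis, ite_smul, one_smul, zero_smul, ← splitSum_leftAntipode]
  refine h.trans (splitSum_congr fun x y _ => ?_)
  simp [convHatFst, antipode_single_wordComp, wordBasis]

theorem convHatSnd_antipode (w : List ℕ) :
    convHatSnd ℤ antipode (dBarL ℤ (wordBasis w)) =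
      counitL ℤ (wordBasis w) • Finsupp.single ([] : SC) 1 := by
  have h := map_splitSum (convHatSnd ℤ antipode).toAddMonoidHom
    (fun x y => Finsupp.single (wordComp x, wordComp y) 1) w
  rw [← dBarL_wordBasis] at h
  rw [counitL_wordBasis, ite_smul, one_smul, zero_smul, ← splitSum_rightAntipode]
  refine h.trans (splitSum_congr fun x y _ => ?_)
  simp [convHatSnd, antipode_single_wordComp, leftAntipode_eq_rightAntipode, wordBasis]

/-- **Theorem.** `(T_•, ∗̂, δ̄)` is a graded connected Hopf algebra over ℤ:
`∗̂` is a graded associative unital product, `δ̄` is a coassociative counital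
coproduct, `δ̄` and the counit are algebra homomorphisms, and an antipode
exists. -/
theorem hat_bar_hopf_algebra :
    -- graded associative unital algebra
    (∀ (p q : ℕ) (P Q : SC), IsSetComp p P → IsSetComp q Q →
        hatL ℤ (Finsupp.single P 1) (Finsupp.single Q 1) ∈ Submodule.span ℤ
          {f : FM ℤ | ∃ U : SC, IsSetComp (p + q) U ∧ f = Finsupp.single U 1}) ∧
    (∀ x y z : FM ℤ, x ∈ Tspan ℤ → y ∈ Tspan ℤ → z ∈ Tspan ℤ →
        hatL ℤ (hatL ℤ x y) z = hatL ℤ x (hatL ℤ y z)) ∧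
    (∀ x : FM ℤ, x ∈ Tspan ℤ →
        hatL ℤ (Finsupp.single ([] : SC) 1) x = x ∧
        hatL ℤ x (Finsupp.single ([] : SC) 1) = x) ∧
    -- coassociative counital coproduct
    (∀ (n : ℕ) (P : SC), IsSetComp n P →
        applyFst ℤ (dBarL ℤ) (dBarL ℤ (Finsupp.single P 1)) =
          applySnd ℤ (dBarL ℤ) (dBarL ℤ (Finsupp.single P 1))) ∧
    (∀ (n : ℕ) (P : SC), IsSetComp n P →
        epsFst ℤ (dBarL ℤ (Finsupp.single P 1)) = Finsupp.single P 1 ∧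
        epsSnd ℤ (dBarL ℤ (Finsupp.single P 1)) = Finsupp.single P 1) ∧
    -- δ̄ is an algebra homomorphism: δ̄(x ∗̂ y) = δ̄(x) · δ̄(y)
    (∀ (p q : ℕ) (P Q : SC), IsSetComp p P → IsSetComp q Q →
        dBarL ℤ (hatL ℤ (Finsupp.single P 1) (Finsupp.single Q 1)) =
          mul2hat ℤ (dBarL ℤ (Finsupp.single P 1)) (dBarL ℤ (Finsupp.single Q 1))) ∧
    -- the counit is an algebra homomorphism
    (∀ (p q : ℕ) (P Q : SC), IsSetComp p P → IsSetComp q Q →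
        counitL ℤ (hatL ℤ (Finsupp.single P 1) (Finsupp.single Q 1)) =
          counitL ℤ (Finsupp.single P 1) * counitL ℤ (Finsupp.single Q 1)) ∧
    counitL ℤ (Finsupp.single ([] : SC) 1) = 1 ∧
    -- connectedness: the degree-0 component is spanned by the empty composition
    (∀ P : SC, IsSetComp 0 P → P = []) ∧
    -- an antipode exists
    (∃ S : FM ℤ →ₗ[ℤ] FM ℤ, ∀ (n : ℕ) (P : SC), IsSetComp n P →
        convHatFst ℤ S (dBarL ℤ (Finsupp.single P 1)) =
          counitL ℤ (Finsupp.single P 1) • Finsupp.single ([] : SC) 1 ∧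
        convHatSnd ℤ S (dBarL ℤ (Finsupp.single P 1)) =
          counitL ℤ (Finsupp.single P 1) • Finsupp.single ([] : SC) 1) := by
  refine ⟨fun p q P Q => hatL_mem_span, fun x y z => hatL_assoc,
    fun x hx => ⟨one_hatL hx, hatL_one hx⟩, fun n P hP => ?_, fun n P hP => ?_,
    fun p q P Q => dBarL_hatL, fun p q P Q => counitL_hatL, ?_, fun P => IsSetComp.eq_nil,
    antipode, fun n P hP => ?_⟩
  · obtain ⟨w, -, rfl, -⟩ := hP.exists_word 0
    rw [← wordBasis, applyFst_dBarL, applySnd_dBarL, splitSum_assoc fun x y z =>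
      Finsupp.single (wordComp x, wordComp y, wordComp z) (1 : ℤ)]
  · obtain ⟨w, -, rfl, -⟩ := hP.exists_word 0
    exact ⟨epsFst_dBarL w, epsSnd_dBarL w⟩
  · simpa [wordBasis_nil] using counitL_wordBasis []
  · obtain ⟨w, -, rfl, -⟩ := hP.exists_word 0
    exact ⟨convHatFst_antipode w, convHatSnd_antipode w⟩
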